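/- Let φ be a non-trivial (non-affine) Bernstein function with φ(0) = 0 and φ(∞) = ∞, let Ψ be its inverse, let (μ_t)_{t>0} be the family of marginal laws of the subordinator associated with φ, and let p ≥ 1. Then Ψ^p is convex on (0,∞), the right limit (Ψ^p)'(0+) exists in [0,∞), and the following are equivalent: (i) x ↦ e^{−t x} Ψ(x)^p is integrable in a neighborhood of ∞ for all t > 0; (ii) t ↦ t·E[ξ_t^{−p}] = t·∫ x^{−p} μ_t(dx) is finite for every t > 0 and is completely monotone on (0,∞). In that case, for all t > 0, t·E[ξ_t^{−p}] = (1/Γ(p+1)) [ (Ψ^p)'(0+) + ∫₀^∞ e^{−t x} (Ψ^p)''(x) dx ]. -/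

import Mathlib

open MeasureTheory Set Filter

/-- A Bernstein function on `(0,∞)`: a nonnegative smooth function whose derivatives satisfy
`(−1)^{n−1} f^{(n)} ≥ 0` on `(0,∞)` for every `n ≥ 1`. -/
def IsBernsteinFn (f : ℝ → ℝ) : Prop :=
  (∀ x : ℝ, 0 < x → 0 ≤ f x) ∧ ContDiffOn ℝ (⊤ : ℕ∞) f (Ioi 0) ∧
    ∀ n : ℕ, 1 ≤ n → ∀ x : ℝ, 0 < x → 0 ≤ (-1 : ℝ) ^ (n - 1) * iteratedDeriv n f x

/-- A completely monotone function on `(0,∞)`: a smooth function with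
`(−1)^n f^{(n)} ≥ 0` on `(0,∞)` for every `n ≥ 0`. -/
def IsCompletelyMonotoneFn (f : ℝ → ℝ) : Prop :=
  ContDiffOn ℝ (⊤ : ℕ∞) f (Ioi 0) ∧
    ∀ n : ℕ, ∀ x : ℝ, 0 < x → 0 ≤ (-1 : ℝ) ^ n * iteratedDeriv n f x

/-!
Integrating the Laplace transform `E[exp (-l ξ_t)] = exp (-t φ(l))` at `l = s ^ (1 / p)` over
`s > 0` gives `Γ(p + 1) E[ξ_t ^ (-p)] = ∫₀^∞ exp (-t φ(s ^ (1 / p))) ds`, because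
`∫₀^∞ exp (-y s ^ (1 / p)) ds = Γ(p + 1) y ^ (-p)`. The function `G = Ψ ^ p` is an increasing
convex `C²` bijection of `(0, ∞)`, and the substitution `s = G(x)` turns the right-hand side into
the Laplace transform of `G'`.

For `g` increasing, the layer cake formula for an exponential variable of rate `t` is the
integration by parts `t ∫₀^∞ e^{-tx} g(x) dx = g(0+) + ∫₀^∞ e^{-tx} g'(x) dx`, valid in `[0, ∞]`.
With `g = G` it shows that the moments are finite exactly under the integrability condition (i).
With `g = G'` it is the asserted formula, and exhibits `t E[ξ_t ^ (-p)]` as the Laplace transform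
of a positive measure, hence as a completely monotone function.
-/

open scoped ENNReal Topology

section MonotoneOn

variable {g : ℝ → ℝ} {s : Set ℝ} {a c L x : ℝ}

theorem deriv_nonneg_of_monotoneOn (hg : MonotoneOn g s) (hs : s ∈ 𝓝 x) : 0 ≤ deriv g x := by
  rw [← derivWithin_of_mem_nhds hs]
  exact hg.derivWithin_nonneg

theorem exists_tendsto_nhdsGT_of_monotoneOn (hg : MonotoneOn g (Ioi a))
    (hc : ∀ x ∈ Ioi a, c ≤ g x) : ∃ L, c ≤ L ∧ Tendsto g (𝓝[>] a) (𝓝 L) :=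
  ⟨_, le_csInf (nonempty_Ioi.image g) (forall_mem_image.2 hc),
    hg.tendsto_nhdsGT ⟨c, forall_mem_image.2 hc⟩⟩

theorem tendsto_nhdsGT_of_monotoneOn_of_image_eq {b : ℝ} (hg : MonotoneOn g (Ioi a))
    (hb : g '' Ioi a = Ioi b) : Tendsto g (𝓝[>] a) (𝓝 b) := by
  simpa only [hb, csInf_Ioi] using hg.tendsto_nhdsGT (hb ▸ bddBelow_Ioi)

theorem intervalIntegrable_deriv_of_monotoneOn (hg : MonotoneOn g (Ioi a))
    (hd : ∀ x ∈ Ioi a, DifferentiableAt ℝ g x) (hL : Tendsto g (𝓝[>] a) (𝓝 L)) (hx : a < x) :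
    IntervalIntegrable (deriv g) volume a x := by
  have hcont : ContinuousOn (Function.update g a L) (Icc a x) := by
    rw [continuousOn_update_iff]
    refine ⟨fun y hy => (hd y (hy.1.1.lt_of_ne' hy.2)).continuousAt.continuousWithinAt, fun _ => ?_⟩
    exact hL.mono_left (nhdsWithin_mono a fun y hy => hy.1.1.lt_of_ne' hy.2)
  rw [intervalIntegrable_iff_integrableOn_Ioc_of_le hx.le]
  refine intervalIntegral.integrableOn_deriv_of_nonneg hcont (fun y hy => ?_)
    fun y hy => deriv_nonneg_of_monotoneOn hg (Ioi_mem_nhds hy.1)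
  exact (hd y hy.1).hasDerivAt.congr_of_eventuallyEq
    ((eventually_ne_nhds hy.1.ne').mono fun z hz => Function.update_of_ne hz L g)

theorem intervalIntegral_deriv_of_monotoneOn (hg : MonotoneOn g (Ioi a))
    (hd : ∀ x ∈ Ioi a, DifferentiableAt ℝ g x) (hL : Tendsto g (𝓝[>] a) (𝓝 L)) (hx : a < x) :
    ∫ y in a..x, deriv g y = g x - L :=
  intervalIntegral.integral_eq_sub_of_hasDerivAt_of_tendsto hx
    (fun y hy => (hd y hy.1).hasDerivAt) (intervalIntegrable_deriv_of_monotoneOn hg hd hL hx) hL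
    ((hd x hx).continuousAt.tendsto.mono_left nhdsWithin_le_nhds)

end MonotoneOn

theorem lintegral_ofReal_eq_add_lintegral_meas_Ici_mul {g : ℝ → ℝ} {L : ℝ} {μ : Measure ℝ}
    (hμ : ∀ᵐ x ∂μ, 0 < x) (hg : MonotoneOn g (Ioi 0)) (hd : ∀ x ∈ Ioi 0, DifferentiableAt ℝ g x)
    (hL₀ : 0 ≤ L) (hL : Tendsto g (𝓝[>] 0) (𝓝 L)) :
    ∫⁻ x, ENNReal.ofReal (g x) ∂μ =
      ENNReal.ofReal L * μ univ + ∫⁻ x in Ioi 0, μ (Ici x) * ENNReal.ofReal (deriv g x) := by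
  have hderiv : ∀ x ∈ Ioi (0 : ℝ), 0 ≤ deriv g x := fun x hx =>
    deriv_nonneg_of_monotoneOn hg (Ioi_mem_nhds hx)
  have hlayer : ∫⁻ x, ENNReal.ofReal (∫ y in (0)..x, deriv g y) ∂μ =
      ∫⁻ x in Ioi 0, μ (Ici x) * ENNReal.ofReal (deriv g x) :=
    lintegral_comp_eq_lintegral_meas_le_mul μ (hμ.mono fun x hx => hx.le) aemeasurable_id
      (fun x hx => intervalIntegrable_deriv_of_monotoneOn hg hd hL hx)
      ((ae_restrict_iff' measurableSet_Ioi).2 (.of_forall hderiv))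
  rw [← hlayer, ← lintegral_const, ← lintegral_add_left measurable_const]
  refine lintegral_congr_ae (hμ.mono fun x hx => ?_)
  have hint : 0 ≤ ∫ y in (0)..x, deriv g y := by
    rw [intervalIntegral.integral_of_le hx.le]
    exact setIntegral_nonneg measurableSet_Ioc fun y hy => hderiv y hy.1
  simp only [← ENNReal.ofReal_add hL₀ hint]
  rw [intervalIntegral_deriv_of_monotoneOn hg hd hL hx, add_sub_cancel]

namespace IsCompletelyMonotoneFn

variable {f g : ℝ → ℝ} {c : ℝ}

theorem congr (hf : IsCompletelyMonotoneFn f) (hfg : EqOn g f (Ioi 0)) :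
    IsCompletelyMonotoneFn g := by
  refine ⟨hf.1.congr hfg, fun n x hx => ?_⟩
  rw [(hfg.eventuallyEq_of_mem (Ioi_mem_nhds hx)).iteratedDeriv_eq]
  exact hf.2 n x hx

theorem const_add (hc : 0 ≤ c) (hf : IsCompletelyMonotoneFn f) :
    IsCompletelyMonotoneFn fun x => c + f x := by
  refine ⟨contDiffOn_const.add hf.1, fun n x hx => ?_⟩
  rcases n.eq_zero_or_pos with rfl | hn
  · simpa using add_nonneg hc (by simpa using hf.2 0 x hx)
  · rw [iteratedDeriv_const_add hn]
    exact hf.2 n x hx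

theorem const_mul (hc : 0 ≤ c) (hf : IsCompletelyMonotoneFn f) :
    IsCompletelyMonotoneFn fun x => c * f x := by
  refine ⟨contDiffOn_const.mul hf.1, fun n x hx => ?_⟩
  rw [iteratedDeriv_const_mul_field, mul_left_comm]
  exact mul_nonneg hc (hf.2 n x hx)

end IsCompletelyMonotoneFn

theorem isCompletelyMonotoneFn_integral_exp {ν : Measure ℝ} (hν : ∀ᵐ x ∂ν, 0 ≤ x)
    (hint : ∀ t > 0, Integrable (fun x => Real.exp (-t * x)) ν) :
    IsCompletelyMonotoneFn fun t => ∫ x, Real.exp (-t * x) ∂ν := by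
  have hmgf : (fun t : ℝ => ∫ x, Real.exp (-t * x) ∂ν) =
      ProbabilityTheory.mgf (fun x => -x) ν := by
    funext t
    simp only [ProbabilityTheory.mgf, neg_mul, mul_neg]
  have hsub : Ioi (0 : ℝ) ⊆ interior (ProbabilityTheory.integrableExpSet (fun x => -x) ν) :=
    interior_maximal (fun t ht => by
      simpa only [ProbabilityTheory.integrableExpSet, mem_ofPred_eq, mul_neg, neg_mul]
        using hint t ht) isOpen_Ioi
  rw [hmgf]
  refine ⟨fun t ht =>
    (ProbabilityTheory.analyticAt_mgf (hsub ht)).contDiffAt.contDiffWithinAt, fun n t ht => ?_⟩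
  rw [ProbabilityTheory.iteratedDeriv_mgf (hsub ht), ← integral_const_mul]
  refine integral_nonneg_of_ae (hν.mono fun x hx => ?_)
  simp only [Pi.zero_apply]
  rw [← mul_assoc, ← mul_pow, neg_one_mul, neg_neg]
  positivity

/-- The Laplace transform of a nonnegative function on `(0, ∞)`, with values in `[0, ∞]` so that it
is defined without integrability. `ENNReal.ofReal` truncates negative values of `f` to `0`. -/
noncomputable def laplaceTransform (f : ℝ → ℝ) (t : ℝ) : ℝ≥0∞ :=
  ∫⁻ x in Ioi 0, ENNReal.ofReal (Real.exp (-t * x) * f x)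

section LaplaceTransform

variable {f g : ℝ → ℝ} {L t : ℝ}

theorem toReal_laplaceTransform (hf : ∀ x ∈ Ioi 0, 0 ≤ f x)
    (hfm : AEStronglyMeasurable f (volume.restrict (Ioi 0))) (t : ℝ) :
    (laplaceTransform f t).toReal = ∫ x in Ioi 0, Real.exp (-t * x) * f x :=
  (integral_eq_lintegral_of_nonneg_ae ((ae_restrict_iff' measurableSet_Ioi).2
    (.of_forall fun x hx => mul_nonneg (Real.exp_nonneg _) (hf x hx)))
    ((by fun_prop : Continuous fun x => Real.exp (-t * x)).aestronglyMeasurable.mul hfm)).symm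

theorem laplaceTransform_ne_top_iff (hf : ∀ x ∈ Ioi 0, 0 ≤ f x)
    (hfm : AEStronglyMeasurable f (volume.restrict (Ioi 0))) :
    laplaceTransform f t ≠ ⊤ ↔ IntegrableOn (fun x => Real.exp (-t * x) * f x) (Ioi 0) :=
  lintegral_ofReal_ne_top_iff_integrable
    ((by fun_prop : Continuous fun x => Real.exp (-t * x)).aestronglyMeasurable.mul hfm)
    ((ae_restrict_iff' measurableSet_Ioi).2
      (.of_forall fun x hx => mul_nonneg (Real.exp_nonneg _) (hf x hx)))

theorem laplaceTransform_ne_top_iff_integrableOn_Ioi_of_monotoneOn (ht : 0 ≤ t)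
    (hf : MonotoneOn f (Ioi 0)) (hf₀ : ∀ x ∈ Ioi 0, 0 ≤ f x) {a : ℝ} (ha : 0 < a) :
    laplaceTransform f t ≠ ⊤ ↔ IntegrableOn (fun x => Real.exp (-t * x) * f x) (Ioi a) := by
  have hfm : AEStronglyMeasurable f (volume.restrict (Ioi 0)) :=
    (aemeasurable_restrict_of_monotoneOn measurableSet_Ioi hf).aestronglyMeasurable
  have hsmall : IntegrableOn (fun x => Real.exp (-t * x) * f x) (Ioc 0 a) := by
    refine IntegrableOn.of_bound (C := 1 * f a) measure_Ioc_lt_top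
      ((by fun_prop : Continuous fun x => Real.exp (-t * x)).aestronglyMeasurable.mul
        (hfm.mono_set Ioc_subset_Ioi_self))
      ((ae_restrict_iff' measurableSet_Ioc).2 (.of_forall fun x hx => ?_))
    have hfx := hf₀ x hx.1
    have hexp : Real.exp (-t * x) ≤ 1 := Real.exp_le_one_iff.2 (by nlinarith [hx.1])
    rw [Real.norm_of_nonneg (by positivity)]
    exact mul_le_mul hexp (hf hx.1 ha hx.2) hfx zero_le_one
  rw [laplaceTransform_ne_top_iff hf₀ hfm, ← Ioc_union_Ioi_eq_Ioi ha.le, integrableOn_union,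
    and_iff_right hsmall]

theorem expMeasure_eq_withDensity (t : ℝ) :
    ProbabilityTheory.expMeasure t =
      (volume.restrict (Ioi 0)).withDensity fun x => ENNReal.ofReal (t * Real.exp (-t * x)) := by
  rw [← withDensity_indicator measurableSet_Ioi]
  refine withDensity_congr_ae ?_
  filter_upwards [Measure.ae_ne volume 0] with x hx
  change ProbabilityTheory.exponentialPDF t x = _
  rcases hx.lt_or_gt with hx | hx
  · rw [ProbabilityTheory.exponentialPDF_of_neg hx, indicator_of_notMem (notMem_Ioi.2 hx.le)]
  · rw [ProbabilityTheory.exponentialPDF_of_nonneg hx.le, indicator_of_mem (mem_Ioi.2 hx), neg_mul]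

theorem expMeasure_Ici (ht : 0 < t) {a : ℝ} (ha : 0 < a) :
    ProbabilityTheory.expMeasure t (Ici a) = ENNReal.ofReal (Real.exp (-t * a)) := by
  rw [expMeasure_eq_withDensity, withDensity_apply _ measurableSet_Ici,
    Measure.restrict_restrict measurableSet_Ici, inter_eq_left.2 (Ici_subset_Ioi.2 ha),
    setLIntegral_congr Ioi_ae_eq_Ici.symm, ← ofReal_integral_eq_lintegral_ofReal
      ((integrableOn_exp_mul_Ioi (neg_lt_zero.2 ht) a).const_mul t)
      (.of_forall fun x => by positivity),
    integral_const_mul, integral_exp_mul_Ioi (neg_lt_zero.2 ht)]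
  field_simp

theorem lintegral_expMeasure (ht : 0 ≤ t) (f : ℝ → ℝ) :
    ∫⁻ x, ENNReal.ofReal (f x) ∂ProbabilityTheory.expMeasure t =
      ENNReal.ofReal t * laplaceTransform f t := by
  rw [expMeasure_eq_withDensity, lintegral_withDensity_eq_lintegral_mul_non_measurable _
    (by fun_prop) (.of_forall fun _ => ENNReal.ofReal_lt_top), laplaceTransform,
    ← lintegral_const_mul' _ _ ENNReal.ofReal_ne_top]
  simp only [Pi.mul_apply, ENNReal.ofReal_mul ht, ENNReal.ofReal_mul (Real.exp_nonneg _), mul_assoc]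

/-- Integration by parts, obtained as the layer cake formula for the exponential law of rate `t`. -/
theorem ofReal_mul_laplaceTransform (ht : 0 < t) (hg : MonotoneOn g (Ioi 0))
    (hd : ∀ x ∈ Ioi 0, DifferentiableAt ℝ g x) (hL₀ : 0 ≤ L) (hL : Tendsto g (𝓝[>] 0) (𝓝 L)) :
    ENNReal.ofReal t * laplaceTransform g t = ENNReal.ofReal L + laplaceTransform (deriv g) t := by
  have := ProbabilityTheory.isProbabilityMeasure_expMeasure ht
  have hpos : ∀ᵐ x ∂ProbabilityTheory.expMeasure t, 0 < x := by
    rw [expMeasure_eq_withDensity]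
    exact (withDensity_absolutelyContinuous _ _).ae_le (ae_restrict_mem measurableSet_Ioi)
  rw [← lintegral_expMeasure ht.le, laplaceTransform,
    lintegral_ofReal_eq_add_lintegral_meas_Ici_mul hpos hg hd hL₀ hL, measure_univ, mul_one]
  congr 1
  refine setLIntegral_congr_fun measurableSet_Ioi fun x hx => ?_
  rw [expMeasure_Ici ht hx, ENNReal.ofReal_mul (Real.exp_nonneg _)]

theorem isCompletelyMonotoneFn_toReal_laplaceTransform
    (hfm : AEStronglyMeasurable f (volume.restrict (Ioi 0)))
    (hfin : ∀ t > 0, laplaceTransform f t ≠ ⊤) :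
    IsCompletelyMonotoneFn fun t => (laplaceTransform f t).toReal := by
  set ν : Measure ℝ := (volume.restrict (Ioi 0)).withDensity fun x => ENNReal.ofReal (f x)
  have hν (t : ℝ) : laplaceTransform f t = ∫⁻ x, ENNReal.ofReal (Real.exp (-t * x)) ∂ν := by
    rw [lintegral_withDensity_eq_lintegral_mul₀ hfm.aemeasurable.ennreal_ofReal (by fun_prop)]
    refine lintegral_congr fun x => ?_
    rw [Pi.mul_apply, ENNReal.ofReal_mul (Real.exp_nonneg _), mul_comm]
  have hν₀ : ∀ᵐ x ∂ν, 0 ≤ x := (withDensity_absolutelyContinuous _ _).ae_le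
    ((ae_restrict_mem measurableSet_Ioi).mono fun x hx => le_of_lt hx)
  have hexp (t : ℝ) : AEStronglyMeasurable (fun x => Real.exp (-t * x)) ν := by fun_prop
  have hexp₀ (t : ℝ) : 0 ≤ᵐ[ν] fun x => Real.exp (-t * x) := .of_forall fun _ => Real.exp_nonneg _
  refine (isCompletelyMonotoneFn_integral_exp hν₀ fun t ht => ?_).congr fun t _ => ?_
  · exact (lintegral_ofReal_ne_top_iff_integrable (hexp t) (hexp₀ t)).1 (hν t ▸ hfin t ht)
  · exact (congrArg ENNReal.toReal (hν t)).trans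
      (integral_eq_lintegral_of_nonneg_ae (hexp₀ t) (hexp t)).symm

theorem laplaceTransform_deriv_ne_top_iff (ht : 0 < t) (hg : MonotoneOn g (Ioi 0))
    (hd : ∀ x ∈ Ioi 0, DifferentiableAt ℝ g x) (hL₀ : 0 ≤ L) (hL : Tendsto g (𝓝[>] 0) (𝓝 L)) :
    laplaceTransform (deriv g) t ≠ ⊤ ↔ laplaceTransform g t ≠ ⊤ := by
  have hparts := ofReal_mul_laplaceTransform ht hg hd hL₀ hL
  refine not_congr ⟨fun h => ?_, fun h => ?_⟩
  · rw [h, add_top] at hparts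
    exact ((ENNReal.mul_eq_top.1 hparts).resolve_right fun h => ENNReal.ofReal_ne_top h.1).2
  · rw [h, ENNReal.mul_top (ENNReal.ofReal_pos.2 ht).ne'] at hparts
    exact (ENNReal.add_eq_top.1 hparts.symm).resolve_left ENNReal.ofReal_ne_top

theorem mul_toReal_laplaceTransform (ht : 0 < t) (hg : MonotoneOn g (Ioi 0))
    (hd : ∀ x ∈ Ioi 0, DifferentiableAt ℝ g x) (hL₀ : 0 ≤ L) (hL : Tendsto g (𝓝[>] 0) (𝓝 L))
    (hfin : laplaceTransform g t ≠ ⊤) :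
    t * (laplaceTransform g t).toReal = L + (laplaceTransform (deriv g) t).toReal := by
  have hparts := congrArg ENNReal.toReal (ofReal_mul_laplaceTransform ht hg hd hL₀ hL)
  rwa [ENNReal.toReal_mul, ENNReal.toReal_add ENNReal.ofReal_ne_top
    ((laplaceTransform_deriv_ne_top_iff ht hg hd hL₀ hL).2 hfin), ENNReal.toReal_ofReal ht.le,
    ENNReal.toReal_ofReal hL₀] at hparts

theorem isCompletelyMonotoneFn_mul_toReal_laplaceTransform (hg : MonotoneOn g (Ioi 0))
    (hd : ∀ x ∈ Ioi 0, DifferentiableAt ℝ g x) (hL₀ : 0 ≤ L) (hL : Tendsto g (𝓝[>] 0) (𝓝 L))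
    (hfin : ∀ t > 0, laplaceTransform g t ≠ ⊤) :
    IsCompletelyMonotoneFn fun t => t * (laplaceTransform g t).toReal :=
  ((isCompletelyMonotoneFn_toReal_laplaceTransform (measurable_deriv g).aestronglyMeasurable
    fun t ht => (laplaceTransform_deriv_ne_top_iff ht hg hd hL₀ hL).2 (hfin t ht)).const_add
      hL₀).congr fun t ht => mul_toReal_laplaceTransform ht hg hd hL₀ hL (hfin t ht)

end LaplaceTransform

section Inverse

theorem convexOn_of_rightInvOn {𝕜 E F : Type*} [Semiring 𝕜] [PartialOrder 𝕜] [AddCommMonoid E]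
    [LinearOrder E] [AddCommMonoid F] [PartialOrder F] [SMul 𝕜 E] [SMul 𝕜 F] {f : E → F}
    {g : F → E} {s : Set E} {t : Set F} (hf : ConcaveOn 𝕜 s f) (hmono : StrictMonoOn f s)
    (ht : Convex 𝕜 t) (hmaps : MapsTo g t s) (hinv : RightInvOn g f t) : ConvexOn 𝕜 t g := by
  refine ⟨ht, fun x hx y hy a b ha hb hab => ?_⟩
  have hxy := ht hx hy ha hb hab
  rw [← hmono.le_iff_le (hmaps hxy) (hf.1 (hmaps hx) (hmaps hy) ha hb hab), hinv hxy]
  simpa only [hinv hx, hinv hy] using hf.2 (hmaps hx) (hmaps hy) ha hb hab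

theorem deriv_pos_of_concaveOn_of_strictMonoOn {f : ℝ → ℝ} {s : Set ℝ} {x : ℝ}
    (hf : ConcaveOn ℝ s f) (hmono : StrictMonoOn f s) (hs : s ∈ 𝓝 x)
    (hd : DifferentiableAt ℝ f x) : 0 < deriv f x := by
  obtain ⟨y, hxy, hy⟩ := ((eventually_mem_nhdsWithin (s := Ioi x)).and
    (mem_nhdsWithin_of_mem_nhds hs)).exists
  refine lt_of_lt_of_le ?_ (hf.slope_le_deriv (mem_of_mem_nhds hs) hy hxy hd)
  rw [slope_def_field]
  exact div_pos (sub_pos.2 (hmono (mem_of_mem_nhds hs) hy hxy)) (sub_pos.2 hxy)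

theorem contDiffAt_of_invOn {𝕜 : Type*} [NontriviallyNormedField 𝕜] [CompleteSpace 𝕜]
    {f g : 𝕜 → 𝕜} {s t : Set 𝕜} {n : WithTop ℕ∞} {y : 𝕜} (hs : IsOpen s) (ht : IsOpen t)
    (hf : ContinuousOn f s) (hg : ContinuousOn g t) (hst : MapsTo f s t) (hts : MapsTo g t s)
    (hinv : InvOn g f s t) (hy : y ∈ t) (hfy : ContDiffAt 𝕜 n f (g y))
    (hf' : deriv f (g y) ≠ 0) : ContDiffAt 𝕜 n g y :=
  let e : OpenPartialHomeomorph 𝕜 𝕜 :=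
    { toFun := f, invFun := g, source := s, target := t, map_source' := hst, map_target' := hts,
      left_inv' := hinv.1, right_inv' := hinv.2, open_source := hs, open_target := ht,
      continuousOn_toFun := hf, continuousOn_invFun := hg }
  e.contDiffAt_symm_deriv hf' hy (differentiableAt_of_deriv_ne_zero hf').hasDerivAt hfy

end Inverse

/-- Increasing convex `C²` bijections of `(0, ∞)` onto itself, with no condition on the values
outside `(0, ∞)`. The inverse `Ψ` of a Bernstein function and its powers `Ψ ^ p`, `1 ≤ p`, are of
this kind. -/
structure IsConvexDiffeo (g : ℝ → ℝ) : Prop where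
  bijOn : BijOn g (Ioi 0) (Ioi 0)
  monotoneOn : MonotoneOn g (Ioi 0)
  convexOn : ConvexOn ℝ (Ioi 0) g
  contDiffOn : ContDiffOn ℝ 2 g (Ioi 0)

theorem bijOn_rpow_Ioi {p : ℝ} (hp : p ≠ 0) : BijOn (fun x : ℝ => x ^ p) (Ioi 0) (Ioi 0) :=
  InvOn.bijOn (f' := fun x => x ^ p⁻¹)
    ⟨fun _ hx => Real.rpow_rpow_inv (le_of_lt hx) hp,
      fun _ hx => Real.rpow_inv_rpow (le_of_lt hx) hp⟩
    (fun _ hx => Real.rpow_pos_of_pos hx p) fun _ hx => Real.rpow_pos_of_pos hx p⁻¹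

namespace IsConvexDiffeo

variable {g : ℝ → ℝ} {L p t x : ℝ}

theorem pos (hg : IsConvexDiffeo g) (hx : 0 < x) : 0 < g x := hg.bijOn.mapsTo hx

theorem rpow (hg : IsConvexDiffeo g) (hp : 1 ≤ p) : IsConvexDiffeo fun x => g x ^ p where
  bijOn := (bijOn_rpow_Ioi (by positivity)).comp hg.bijOn
  monotoneOn x hx y hy hxy :=
    Real.rpow_le_rpow (hg.pos hx).le (hg.monotoneOn hx hy hxy) (by positivity)
  convexOn := by
    refine ConvexOn.comp (g := fun x : ℝ => x ^ p) ?_ hg.convexOn ?_ <;> rw [hg.bijOn.image_eq]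
    · exact (convexOn_rpow hp).subset Ioi_subset_Ici_self (convex_Ioi 0)
    · exact fun x hx y _ hxy => Real.rpow_le_rpow (le_of_lt hx) hxy (by positivity)
  contDiffOn := hg.contDiffOn.rpow_const_of_ne fun _ hx => (hg.pos hx).ne'

theorem tendsto_nhdsGT_zero (hg : IsConvexDiffeo g) : Tendsto g (𝓝[>] 0) (𝓝 0) :=
  tendsto_nhdsGT_of_monotoneOn_of_image_eq hg.monotoneOn hg.bijOn.image_eq

theorem differentiableAt (hg : IsConvexDiffeo g) (hx : x ∈ Ioi 0) : DifferentiableAt ℝ g x :=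
  (hg.contDiffOn.contDiffAt (Ioi_mem_nhds hx)).differentiableAt two_ne_zero

theorem differentiableAt_deriv (hg : IsConvexDiffeo g) (hx : x ∈ Ioi 0) :
    DifferentiableAt ℝ (deriv g) x :=
  ((hg.contDiffOn.deriv_of_isOpen (m := 1) isOpen_Ioi (by norm_num)).contDiffAt
    (Ioi_mem_nhds hx)).differentiableAt one_ne_zero

theorem monotoneOn_deriv (hg : IsConvexDiffeo g) : MonotoneOn (deriv g) (Ioi 0) :=
  hg.convexOn.monotoneOn_deriv fun _ hx => hg.differentiableAt hx

theorem exists_tendsto_deriv (hg : IsConvexDiffeo g) :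
    ∃ L, 0 ≤ L ∧ Tendsto (deriv g) (𝓝[>] 0) (𝓝 L) :=
  exists_tendsto_nhdsGT_of_monotoneOn hg.monotoneOn_deriv fun _ hx =>
    deriv_nonneg_of_monotoneOn hg.monotoneOn (Ioi_mem_nhds hx)

theorem integrableOn_exp_mul_iff (hg : IsConvexDiffeo g) (ht : 0 < t) {a : ℝ} (ha : 0 < a) :
    IntegrableOn (fun x => Real.exp (-t * x) * g x) (Ioi a) ↔
      laplaceTransform (deriv g) t ≠ ⊤ := by
  rw [laplaceTransform_deriv_ne_top_iff ht hg.monotoneOn (fun _ => hg.differentiableAt) le_rfl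
    hg.tendsto_nhdsGT_zero, laplaceTransform_ne_top_iff_integrableOn_Ioi_of_monotoneOn ht.le
    hg.monotoneOn (fun _ hx => (hg.pos hx).le) ha]

theorem isCompletelyMonotoneFn_mul_toReal_laplaceTransform_deriv (hg : IsConvexDiffeo g)
    (hfin : ∀ t > 0, laplaceTransform (deriv g) t ≠ ⊤) :
    IsCompletelyMonotoneFn fun t => t * (laplaceTransform (deriv g) t).toReal :=
  let ⟨_, hL₀, hL⟩ := hg.exists_tendsto_deriv
  isCompletelyMonotoneFn_mul_toReal_laplaceTransform hg.monotoneOn_deriv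
    (fun _ => hg.differentiableAt_deriv) hL₀ hL hfin

theorem mul_toReal_laplaceTransform_deriv (hg : IsConvexDiffeo g) (ht : 0 < t) (hL₀ : 0 ≤ L)
    (hL : Tendsto (deriv g) (𝓝[>] 0) (𝓝 L)) (hfin : laplaceTransform (deriv g) t ≠ ⊤) :
    t * (laplaceTransform (deriv g) t).toReal =
      L + ∫ x in Ioi 0, Real.exp (-t * x) * deriv (deriv g) x := by
  rw [mul_toReal_laplaceTransform ht hg.monotoneOn_deriv (fun _ => hg.differentiableAt_deriv) hL₀
    hL hfin, toReal_laplaceTransform (fun _ hx =>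
    deriv_nonneg_of_monotoneOn hg.monotoneOn_deriv (Ioi_mem_nhds hx))
    (measurable_deriv _).aestronglyMeasurable]

theorem lintegral_Ioi_eq (hg : IsConvexDiffeo g) (u : ℝ → ℝ≥0∞) :
    ∫⁻ x in Ioi 0, u x = ∫⁻ x in Ioi 0, ENNReal.ofReal (deriv g x) * u (g x) := by
  rw [← lintegral_image_eq_lintegral_deriv_mul_of_monotoneOn measurableSet_Ioi
    (fun x hx => (hg.differentiableAt hx).hasDerivAt.hasDerivWithinAt) hg.monotoneOn,
    hg.bijOn.image_eq]

end IsConvexDiffeo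

namespace IsBernsteinFn

variable {φ Ψ : ℝ → ℝ}

theorem deriv_nonneg (hφ : IsBernsteinFn φ) {x : ℝ} (hx : 0 < x) : 0 ≤ deriv φ x := by
  simpa using hφ.2.2 1 le_rfl x hx

theorem deriv_deriv_nonpos (hφ : IsBernsteinFn φ) {x : ℝ} (hx : 0 < x) :
    deriv (deriv φ) x ≤ 0 := by
  simpa [iteratedDeriv_succ, iteratedDeriv_zero] using hφ.2.2 2 one_le_two x hx

theorem differentiableOn (hφ : IsBernsteinFn φ) : DifferentiableOn ℝ φ (Ioi 0) :=
  hφ.2.1.differentiableOn (by simp)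

theorem concaveOn (hφ : IsBernsteinFn φ) : ConcaveOn ℝ (Ioi 0) φ := by
  refine concaveOn_of_deriv2_nonpos' (convex_Ioi 0) hφ.differentiableOn ?_
    fun x hx => hφ.deriv_deriv_nonpos hx
  exact (hφ.2.1.deriv_of_isOpen (m := 1) isOpen_Ioi (by norm_cast)).differentiableOn one_ne_zero

theorem strictMonoOn (hφ : IsBernsteinFn φ) (hc : ContinuousOn φ (Ici 0))
    (hinj : InjOn φ (Ici 0)) : StrictMonoOn φ (Ici 0) := by
  refine (monotoneOn_of_deriv_nonneg (convex_Ici 0) hc ?_ ?_).strictMonoOn_of_injOn hinj <;>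
    rw [interior_Ici]
  · exact hφ.differentiableOn
  · exact fun x hx => hφ.deriv_nonneg hx

theorem isConvexDiffeo_of_invOn (hφ : IsBernsteinFn φ) (hc : ContinuousOn φ (Ici 0))
    (h0 : φ 0 = 0) (hinf : Tendsto φ atTop atTop) (hinv : InvOn Ψ φ (Ici 0) (Ici 0)) :
    IsConvexDiffeo Ψ := by
  have hmono := hφ.strictMonoOn hc hinv.1.injOn
  have hmono' := hmono.mono Ioi_subset_Ici_self
  have hinv' := hinv.mono Ioi_subset_Ici_self Ioi_subset_Ici_self
  have hbij : BijOn φ (Ioi 0) (Ioi 0) := by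
    simpa only [hc.image_Ioi_of_strictMonoOn hmono hinf, h0] using hmono'.injOn.bijOn_image
  have hbijΨ : BijOn Ψ (Ioi 0) (Ioi 0) := hbij.symm hinv'.symm
  have hmonoΨ : MonotoneOn Ψ (Ioi 0) :=
    Function.monotoneOn_of_rightInvOn_of_mapsTo hmono'.monotoneOn hinv'.2 hbijΨ.mapsTo
  have hcontΨ : ContinuousOn Ψ (Ioi 0) := fun y hy =>
    (continuousAt_of_monotoneOn_of_image_mem_nhds hmonoΨ (Ioi_mem_nhds hy)
      (hbijΨ.image_eq.symm ▸ Ioi_mem_nhds (hbijΨ.mapsTo hy))).continuousWithinAt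
  refine ⟨hbijΨ, hmonoΨ, convexOn_of_rightInvOn hφ.concaveOn hmono' (convex_Ioi 0) hbijΨ.mapsTo
    hinv'.2, fun y hy => ContDiffAt.contDiffWithinAt ?_⟩
  have hΨy : Ioi 0 ∈ 𝓝 (Ψ y) := Ioi_mem_nhds (hbijΨ.mapsTo hy)
  exact contDiffAt_of_invOn isOpen_Ioi isOpen_Ioi (hc.mono Ioi_subset_Ici_self) hcontΨ
    hbij.mapsTo hbijΨ.mapsTo hinv' hy ((hφ.2.1.contDiffAt hΨy).of_le (by norm_cast))
    (deriv_pos_of_concaveOn_of_strictMonoOn hφ.concaveOn hmono' hΨy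
      (hφ.differentiableOn.differentiableAt hΨy)).ne'

end IsBernsteinFn

theorem ofReal_rpow_neg_eq_lintegral {p x : ℝ} (hp : 0 < p) (hx : 0 < x) :
    ENNReal.ofReal (x ^ (-p)) = ENNReal.ofReal (1 / Real.Gamma (p + 1)) *
      ∫⁻ s in Ioi (0 : ℝ), ENNReal.ofReal (Real.exp (-s ^ p⁻¹ * x)) := by
  have hΓ := Real.Gamma_pos_of_pos (by positivity : 0 < p + 1)
  have hint : ∫ s in Ioi (0 : ℝ), Real.exp (-s ^ p⁻¹ * x) = x ^ (-p) * Real.Gamma (p + 1) := by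
    simpa [mul_comm] using integral_exp_neg_mul_rpow (inv_pos.2 hp) hx
  rw [← ofReal_integral_eq_lintegral_ofReal
    (Integrable.of_integral_ne_zero (hint ▸ (mul_pos (Real.rpow_pos_of_pos hx _) hΓ).ne'))
    (.of_forall fun _ => Real.exp_nonneg _), hint,
    ← ENNReal.ofReal_mul (one_div_pos.2 hΓ).le]
  field_simp

theorem lintegral_rpow_neg_eq_lintegral_lintegral_exp {m : Measure ℝ} [SFinite m]
    (hm : ∀ᵐ x ∂m, 0 < x) {p : ℝ} (hp : 0 < p) :
    ∫⁻ x, ENNReal.ofReal (x ^ (-p)) ∂m = ENNReal.ofReal (1 / Real.Gamma (p + 1)) *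
      ∫⁻ s in Ioi (0 : ℝ), ∫⁻ x, ENNReal.ofReal (Real.exp (-s ^ p⁻¹ * x)) ∂m := by
  rw [lintegral_lintegral_swap (by fun_prop), ← lintegral_const_mul' _ _ ENNReal.ofReal_ne_top]
  exact lintegral_congr_ae (hm.mono fun x hx => ofReal_rpow_neg_eq_lintegral hp hx)

theorem continuousOn_integral_exp_neg_mul {m : Measure ℝ} [IsFiniteMeasure m]
    (hm : ∀ᵐ x ∂m, 0 ≤ x) : ContinuousOn (fun l => ∫ x, Real.exp (-l * x) ∂m) (Ici 0) := by
  refine continuousOn_of_dominated (bound := fun _ => 1) (fun l _ => by fun_prop)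
    (fun l hl => hm.mono fun x hx => ?_) (integrable_const 1)
    (.of_forall fun x => by fun_prop)
  rw [Real.norm_of_nonneg (Real.exp_nonneg _), Real.exp_le_one_iff, neg_mul, neg_nonpos]
  exact mul_nonneg hl hx

/-- `m` is the law at time `t` of a subordinator with Laplace exponent `φ`, encoded as a probability
measure on `ℝ` carried by `(0, ∞)`. -/
structure IsSubordinatorLaw (φ : ℝ → ℝ) (t : ℝ) (m : Measure ℝ) : Prop where
  isProbabilityMeasure : IsProbabilityMeasure m
  ae_pos : ∀ᵐ x ∂m, 0 < x
  integral_exp : ∀ l, 0 ≤ l → ∫ x, Real.exp (-l * x) ∂m = Real.exp (-t * φ l)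

namespace IsSubordinatorLaw

variable {φ Ψ : ℝ → ℝ} {t p : ℝ} {m : Measure ℝ}

theorem continuousOn_exponent (hm : IsSubordinatorLaw φ t m) (ht : t ≠ 0) :
    ContinuousOn φ (Ici 0) := by
  have := hm.isProbabilityMeasure
  have hlog : ContinuousOn (fun l => -t⁻¹ * Real.log (∫ x, Real.exp (-l * x) ∂m)) (Ici 0) :=
    ((continuousOn_integral_exp_neg_mul (hm.ae_pos.mono fun _ => le_of_lt)).log fun l hl =>
      hm.integral_exp l hl ▸ Real.exp_ne_zero _).const_mul _
  refine hlog.congr fun l hl => ?_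
  simp only [hm.integral_exp l hl, Real.log_exp]
  field_simp

theorem lintegral_exp (hm : IsSubordinatorLaw φ t m) {l : ℝ} (hl : 0 ≤ l) :
    ∫⁻ x, ENNReal.ofReal (Real.exp (-l * x)) ∂m = ENNReal.ofReal (Real.exp (-t * φ l)) := by
  rw [← hm.integral_exp l hl, ofReal_integral_eq_lintegral_ofReal
    (.of_integral_ne_zero (hm.integral_exp l hl ▸ Real.exp_ne_zero _))
    (.of_forall fun _ => Real.exp_nonneg _)]

/-- This is `Γ(p + 1) E[ξ_t ^ (-p)] = ∫₀^∞ exp (-t φ(s ^ (1 / p))) ds` after substituting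
`s = Ψ(x) ^ p`. -/
theorem lintegral_rpow_neg (hm : IsSubordinatorLaw φ t m) (hΨ : IsConvexDiffeo Ψ)
    (hinv : RightInvOn Ψ φ (Ioi 0)) (hp : 1 ≤ p) :
    ∫⁻ x, ENNReal.ofReal (x ^ (-p)) ∂m = ENNReal.ofReal (1 / Real.Gamma (p + 1)) *
      laplaceTransform (deriv fun x => Ψ x ^ p) t := by
  have := hm.isProbabilityMeasure
  have hp₀ : 0 < p := by positivity
  rw [lintegral_rpow_neg_eq_lintegral_lintegral_exp hm.ae_pos hp₀, (hΨ.rpow hp).lintegral_Ioi_eq,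
    laplaceTransform]
  congr 1
  refine setLIntegral_congr_fun measurableSet_Ioi fun x hx => ?_
  have hΨx := hΨ.pos hx
  simp only [Real.rpow_rpow_inv hΨx.le hp₀.ne']
  rw [hm.lintegral_exp hΨx.le, hinv hx, ENNReal.ofReal_mul (Real.exp_nonneg _), mul_comm]

theorem lintegral_rpow_neg_ne_top_iff (hm : IsSubordinatorLaw φ t m) (hΨ : IsConvexDiffeo Ψ)
    (hinv : RightInvOn Ψ φ (Ioi 0)) (hp : 1 ≤ p) :
    ∫⁻ x, ENNReal.ofReal (x ^ (-p)) ∂m ≠ ⊤ ↔ laplaceTransform (deriv fun x => Ψ x ^ p) t ≠ ⊤ := by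
  have hΓ := Real.Gamma_pos_of_pos (by positivity : 0 < p + 1)
  simp [hm.lintegral_rpow_neg hΨ hinv hp, ENNReal.mul_eq_top, hΓ]

theorem mul_toReal_lintegral_rpow_neg (hm : IsSubordinatorLaw φ t m) (hΨ : IsConvexDiffeo Ψ)
    (hinv : RightInvOn Ψ φ (Ioi 0)) (hp : 1 ≤ p) :
    t * (∫⁻ x, ENNReal.ofReal (x ^ (-p)) ∂m).toReal =
      1 / Real.Gamma (p + 1) * (t * (laplaceTransform (deriv fun x => Ψ x ^ p) t).toReal) := by
  have hΓ := Real.Gamma_pos_of_pos (by positivity : 0 < p + 1)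
  rw [hm.lintegral_rpow_neg hΨ hinv hp, ENNReal.toReal_mul,
    ENNReal.toReal_ofReal (one_div_pos.2 hΓ).le, mul_left_comm]

end IsSubordinatorLaw

/-- Let `φ` be a non-affine Bernstein function with `φ(0) = 0`, `φ(∞) = ∞`,
inverse `Ψ`, marginal subordinator laws `(μ_t)_{t>0}`, and let `p ≥ 1`. Then `Ψ^p` is convex
on `(0,∞)`, the right limit `(Ψ^p)'(0+)` exists in `[0,∞)`, and: (i) `x ↦ e^{−tx} Ψ(x)^p` is
integrable near `∞` for all `t > 0` iff (ii) `t ↦ t·E[ξ_t^{−p}]` is finite for every `t > 0`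
and completely monotone on `(0,∞)`. In that case
`t·E[ξ_t^{−p}] = (1/Γ(p+1)) [(Ψ^p)'(0+) + ∫₀^∞ e^{−tx} (Ψ^p)''(x) dx]` for all `t > 0`. -/
theorem stmt_7 (φ Ψ : ℝ → ℝ) (hφ : IsBernsteinFn φ)
    (hnonaffine : ¬∃ c d : ℝ, ∀ x : ℝ, 0 ≤ x → φ x = c + d * x)
    (h0 : φ 0 = 0) (hinf : Tendsto φ atTop atTop) (hinv : Set.InvOn Ψ φ (Ici 0) (Ici 0))
    (μ : ℝ → Measure ℝ) (hprob : ∀ t : ℝ, 0 < t → IsProbabilityMeasure (μ t))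
    (hsupp : ∀ t : ℝ, 0 < t → μ t {x | x ≤ 0} = 0)
    (hlaplace : ∀ t : ℝ, 0 < t → ∀ l : ℝ, 0 ≤ l →
      ∫ x, Real.exp (-l * x) ∂(μ t) = Real.exp (-t * φ l))
    (p : ℝ) (hp : 1 ≤ p) :
    ConvexOn ℝ (Ioi 0) (fun x => Ψ x ^ p) ∧
    ∃ L : ℝ, 0 ≤ L ∧
      Tendsto (deriv (fun y => Ψ y ^ p)) (nhdsWithin 0 (Ioi 0)) (nhds L) ∧
      ((∀ t : ℝ, 0 < t → IntegrableOn (fun x => Real.exp (-t * x) * Ψ x ^ p) (Ioi 1)) ↔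
        ((∀ t : ℝ, 0 < t → ∫⁻ x, ENNReal.ofReal (x ^ (-p)) ∂(μ t) ≠ ⊤) ∧
          IsCompletelyMonotoneFn
            (fun t => t * (∫⁻ x, ENNReal.ofReal (x ^ (-p)) ∂(μ t)).toReal))) ∧
      ((∀ t : ℝ, 0 < t → IntegrableOn (fun x => Real.exp (-t * x) * Ψ x ^ p) (Ioi 1)) →
        ∀ t : ℝ, 0 < t →
          t * (∫⁻ x, ENNReal.ofReal (x ^ (-p)) ∂(μ t)).toReal =
            (1 / Real.Gamma (p + 1)) *
              (L + ∫ x in Ioi (0 : ℝ),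
                Real.exp (-t * x) * deriv (deriv (fun y => Ψ y ^ p)) x)) := by
  have hm : ∀ t > 0, IsSubordinatorLaw φ t (μ t) := fun t ht =>
    ⟨hprob t ht, by simpa [ae_iff] using hsupp t ht, hlaplace t ht⟩
  have hφΨ : RightInvOn Ψ φ (Ioi 0) := hinv.2.mono Ioi_subset_Ici_self
  have hΨ : IsConvexDiffeo Ψ :=
    hφ.isConvexDiffeo_of_invOn ((hm 1 one_pos).continuousOn_exponent one_ne_zero) h0 hinf hinv
  have hG : IsConvexDiffeo fun x => Ψ x ^ p := hΨ.rpow hp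
  have hΓ : 0 < Real.Gamma (p + 1) := Real.Gamma_pos_of_pos (by positivity)
  obtain ⟨L, hL₀, hL⟩ := hG.exists_tendsto_deriv
  have hmoment : ∀ t > 0, ∫⁻ x, ENNReal.ofReal (x ^ (-p)) ∂μ t ≠ ⊤ ↔
      laplaceTransform (deriv fun x => Ψ x ^ p) t ≠ ⊤ := fun t ht =>
    (hm t ht).lintegral_rpow_neg_ne_top_iff hΨ hφΨ hp
  rw [forall₂_congr fun t ht => hG.integrableOn_exp_mul_iff ht one_pos, forall₂_congr hmoment]
  refine ⟨hG.convexOn, L, hL₀, hL, ⟨fun hfin => ⟨hfin, ?_⟩, fun h => h.1⟩, fun hfin t ht => ?_⟩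
  · exact ((hG.isCompletelyMonotoneFn_mul_toReal_laplaceTransform_deriv hfin).const_mul
      (one_div_pos.2 hΓ).le).congr fun t ht => (hm t ht).mul_toReal_lintegral_rpow_neg hΨ hφΨ hp
  · rw [(hm t ht).mul_toReal_lintegral_rpow_neg hΨ hφΨ hp,
      hG.mul_toReal_laplaceTransform_deriv ht hL₀ hL (hfin t ht)]
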